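/- arXiv:2312.05980 — 2 statements merged into one kernel-verified Lean document; each statement's English description precedes it below -/
import Mathlib

section
/- Opening a station next to an OD vertex carrying impossible demand increases the satisfied demand by exactly the captured amount: suppose v₀ ∈ O is isolated in M (no s ∈ S with (v₀, s) ∈ M), and let s₀ ∉ S be a new station with capacity C₀ ≥ 0 adjacent only to v₀. Then the satisfied demand of the network with station set S ∪ {s₀}, edge set M ∪ {(v₀, s₀)}, and capacity function extending C by C_{s₀} = C₀ equals OPT(T, O, S, M, A, C) + Σ_{t∈T} min(A^t_{v₀}, C₀). In particular, the satisfied demand strictly increases whenever C₀ > 0 and A^t_{v₀} > 0 for some t ∈ T. -/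
open Finset

/-- Feasibility of a flow `(a, b, c)` in the demand-assignment network
`(T, O, S, M, A, C)`. -/
def IsFeasible {ι α β : Type*} [DecidableEq α] [DecidableEq β]
    (T : Finset ι) (O : Finset α) (S : Finset β) (M : Finset (α × β))
    (A : ι → α → ℝ) (C : β → ℝ)
    (a : ι → α → ℝ) (b : ι → α × β → ℝ) (c : ι → β → ℝ) : Prop :=
  ∀ t ∈ T,
    (∀ p : α × β, p ∉ M → b t p = 0) ∧
    (∀ v ∈ O, a t v = ∑ s ∈ S.filter (fun s => (v, s) ∈ M), b t (v, s)) ∧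
    (∀ s ∈ S, ∑ v ∈ O.filter (fun v => (v, s) ∈ M), b t (v, s) = c t s) ∧
    (∀ v ∈ O, 0 ≤ a t v ∧ a t v ≤ A t v) ∧
    (∀ p : α × β, 0 ≤ b t p) ∧
    (∀ s ∈ S, 0 ≤ c t s ∧ c t s ≤ C s)

/-- The value of a flow: total flow leaving the source. -/
def flowValue {ι α : Type*} (T : Finset ι) (O : Finset α) (a : ι → α → ℝ) : ℝ :=
  ∑ t ∈ T, ∑ v ∈ O, a t v

/-- The satisfied demand: supremum of the values of feasible flows. -/
noncomputable def OPT {ι α β : Type*} [DecidableEq α] [DecidableEq β]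
    (T : Finset ι) (O : Finset α) (S : Finset β) (M : Finset (α × β))
    (A : ι → α → ℝ) (C : β → ℝ) : ℝ :=
  sSup {x : ℝ | ∃ a b c, IsFeasible T O S M A C a b c ∧ x = flowValue T O a}

lemma feas_iff {ι α β : Type*} [DecidableEq α] [DecidableEq β]
    (T : Finset ι) (O : Finset α) (S : Finset β) (M : Finset (α × β))
    (A : ι → α → ℝ) (C : β → ℝ)
    (a : ι → α → ℝ) (b : ι → α × β → ℝ) (c : ι → β → ℝ) :
    IsFeasible T O S M A C a b c ↔ ∀ t ∈ T,
    (∀ p : α × β, p ∉ M → b t p = 0) ∧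
    (∀ v ∈ O, a t v = ∑ s ∈ S, b t (v, s)) ∧
    (∀ s ∈ S, ∑ v ∈ O, b t (v, s) = c t s) ∧
    (∀ v ∈ O, 0 ≤ a t v ∧ a t v ≤ A t v) ∧
    (∀ p : α × β, 0 ≤ b t p) ∧
    (∀ s ∈ S, 0 ≤ c t s ∧ c t s ≤ C s) := by
  unfold IsFeasible
  refine forall₂_congr fun t _ => and_congr_right fun h => ?_
  have h1 : ∀ v, ∑ s ∈ S.filter (fun s => (v, s) ∈ M), b t (v, s) = ∑ s ∈ S, b t (v, s) := by
    intro v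
    refine Finset.sum_filter_of_ne fun s _ hs => ?_
    by_contra hn
    exact hs (h _ hn)
  have h2 : ∀ s, ∑ v ∈ O.filter (fun v => (v, s) ∈ M), b t (v, s) = ∑ v ∈ O, b t (v, s) := by
    intro s
    refine Finset.sum_filter_of_ne fun v _ hs => ?_
    by_contra hn
    exact hs (h _ hn)
  simp only [h1, h2]

lemma opt_bdd {ι α β : Type*} [DecidableEq α] [DecidableEq β]
    (T : Finset ι) (O : Finset α) (S : Finset β) (M : Finset (α × β))
    (A : ι → α → ℝ) (C : β → ℝ) :
    BddAbove {x : ℝ | ∃ a b c, IsFeasible T O S M A C a b c ∧ x = flowValue T O a} := by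
  refine ⟨flowValue T O A, ?_⟩
  rintro x ⟨a, b, c, h, rfl⟩
  exact Finset.sum_le_sum fun t ht => Finset.sum_le_sum fun v hv => ((h t ht).2.2.2.1 v hv).2

lemma opt_nonempty {ι α β : Type*} [DecidableEq α] [DecidableEq β]
    (T : Finset ι) (O : Finset α) (S : Finset β) (M : Finset (α × β))
    (A : ι → α → ℝ) (C : β → ℝ)
    (hA : ∀ t ∈ T, ∀ v ∈ O, 0 ≤ A t v) (hC : ∀ s ∈ S, 0 ≤ C s) :
    {x : ℝ | ∃ a b c, IsFeasible T O S M A C a b c ∧ x = flowValue T O a}.Nonempty := by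
  refine ⟨_, fun _ _ => 0, fun _ _ => 0, fun _ _ => 0, ?_, rfl⟩
  rw [feas_iff]
  intro t ht
  simpa using ⟨hA t ht, hC⟩

lemma value_split {ι α : Type*} [DecidableEq α] (T : Finset ι) (O : Finset α)
    (a a' : ι → α → ℝ) (m : ι → ℝ) (v₀ : α) (hv₀ : v₀ ∈ O)
    (h0 : ∀ t ∈ T, a' t v₀ = a t v₀ + m t)
    (h : ∀ t ∈ T, ∀ v ∈ O, v ≠ v₀ → a' t v = a t v) :
    flowValue T O a' = flowValue T O a + ∑ t ∈ T, m t := by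
  unfold flowValue
  rw [← Finset.sum_add_distrib]
  refine Finset.sum_congr rfl fun t ht => ?_
  rw [← Finset.add_sum_erase O _ hv₀, ← Finset.add_sum_erase O (a t) hv₀, h0 t ht]
  rw [Finset.sum_congr rfl fun v hv => h t ht v (Finset.mem_of_mem_erase hv)
    (Finset.ne_of_mem_erase hv)]
  ring

/-- Opening a station next to an OD vertex carrying impossible demand increases the
satisfied demand by exactly the captured amount, and strictly increases it whenever
the new capacity and some period's demand at that vertex are positive. -/
theorem stmt7
    {ι α β : Type*} [DecidableEq α] [DecidableEq β]
    (T : Finset ι) (O : Finset α) (S : Finset β) (M : Finset (α × β))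
    (A : ι → α → ℝ) (C : β → ℝ)
    (hT : T.Nonempty) (hM : M ⊆ O ×ˢ S)
    (hA : ∀ t ∈ T, ∀ v ∈ O, 0 ≤ A t v) (hC : ∀ s ∈ S, 0 ≤ C s)
    (v₀ : α) (hv₀ : v₀ ∈ O) (hiso : ∀ s ∈ S, (v₀, s) ∉ M)
    (s₀ : β) (hs₀ : s₀ ∉ S) (C₀ : ℝ) (hC₀ : 0 ≤ C₀) :
    OPT T O (insert s₀ S) (insert (v₀, s₀) M) A (Function.update C s₀ C₀) =
        OPT T O S M A C + ∑ t ∈ T, min (A t v₀) C₀ ∧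
      ((0 < C₀ ∧ ∃ t ∈ T, 0 < A t v₀) →
        OPT T O S M A C <
          OPT T O (insert s₀ S) (insert (v₀, s₀) M) A (Function.update C s₀ C₀)) := by
  have hs₀M : ∀ v, (v, s₀) ∉ M := fun v hv => hs₀ (Finset.mem_product.1 (hM hv)).2
  have hv₀M : ∀ s, (v₀, s) ∉ M := fun s hs => hiso s (Finset.mem_product.1 (hM hs)).2 hs
  have hne : ∀ s ∈ S, s ≠ s₀ := fun s hs h => hs₀ (h ▸ hs)
  have hC' : ∀ s ∈ insert s₀ S, 0 ≤ Function.update C s₀ C₀ s := by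
    intro s hs
    by_cases h : s = s₀
    · subst h; simpa using hC₀
    · rw [Function.update_of_ne h]
      exact hC s (Finset.mem_of_mem_insert_of_ne hs h)
  have hmain : OPT T O (insert s₀ S) (insert (v₀, s₀) M) A (Function.update C s₀ C₀) =
        OPT T O S M A C + ∑ t ∈ T, min (A t v₀) C₀ := by
    apply le_antisymm
    · refine csSup_le (opt_nonempty _ _ _ _ _ _ hA hC') ?_
      rintro x ⟨a, b, c, h, rfl⟩
      rw [feas_iff] at h
      have ha0 : ∀ t ∈ T, a t v₀ = b t (v₀, s₀) := by
        intro t ht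
        obtain ⟨h1, h2, -⟩ := h t ht
        rw [h2 v₀ hv₀, Finset.sum_insert hs₀, Finset.sum_eq_zero, add_zero]
        intro s hs
        apply h1
        simp [hne s hs, hv₀M]
      have hc0 : ∀ t ∈ T, c t s₀ = b t (v₀, s₀) := by
        intro t ht
        obtain ⟨h1, h2, h3, -⟩ := h t ht
        rw [← h3 s₀ (Finset.mem_insert_self _ _)]
        refine Finset.sum_eq_single v₀ ?_ (fun h => (h hv₀).elim)
        intro v _ hv
        apply h1
        simp [hv, hs₀M]
      let a' : ι → α → ℝ := fun t v => if v = v₀ then 0 else a t v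
      have hval : flowValue T O a = flowValue T O a' + ∑ t ∈ T, a t v₀ := by
        apply value_split T O a' a _ v₀ hv₀
        · intro t _; simp [a']
        · intro t _ v _ hv; simp [a', hv]
      rw [hval]
      refine add_le_add (le_csSup (opt_bdd _ _ _ _ _ _)
        ⟨a', fun t p => if p = (v₀, s₀) then 0 else b t p, c, ?_, rfl⟩)
        (Finset.sum_le_sum fun t ht => le_min ((h t ht).2.2.2.1 v₀ hv₀).2 ?_)
      · rw [feas_iff]
        intro t ht
        obtain ⟨h1, h2, h3, h4, h5, h6⟩ := h t ht
        refine ⟨?_, ?_, ?_, ?_, ?_, ?_⟩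
        · intro p hp
          by_cases hq : p = (v₀, s₀)
          · simp [hq]
          · simp only [hq, if_false]
            exact h1 p (by simp [hq, hp])
        · intro v hv
          have e : ∀ s ∈ S, (if (v, s) = (v₀, s₀) then 0 else b t (v, s)) = b t (v, s) := by
            intro s hs
            simp [hne s hs]
          rw [Finset.sum_congr rfl e]
          by_cases hvv : v = v₀
          · subst hvv
            simp only [a', if_true]
            symm
            apply Finset.sum_eq_zero
            intro s hs
            apply h1
            simp [hne s hs, hv₀M]
          · simp only [a', hvv, if_false]
            rw [h2 v hv, Finset.sum_insert hs₀, h1 (v, s₀) (by simp [hvv, hs₀M]), zero_add]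
        · intro s hs
          rw [← h3 s (Finset.mem_insert_of_mem hs)]
          refine Finset.sum_congr rfl fun v _ => ?_
          simp [hne s hs]
        · intro v hv
          by_cases hvv : v = v₀
          · subst hvv; simpa [a'] using hA t ht v hv
          · simpa [a', hvv] using h4 v hv
        · intro p
          split_ifs
          · exact le_rfl
          · exact h5 p
        · intro s hs
          have := h6 s (Finset.mem_insert_of_mem hs)
          rwa [Function.update_of_ne (hne s hs)] at this
      · rw [ha0 t ht, ← hc0 t ht]
        simpa using ((h t ht).2.2.2.2.2 s₀ (Finset.mem_insert_self _ _)).2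
    · rw [← le_sub_iff_add_le]
      refine csSup_le (opt_nonempty _ _ _ _ _ _ hA hC) ?_
      rintro x ⟨a, b, c, h, rfl⟩
      rw [feas_iff] at h
      rw [le_sub_iff_add_le]
      have ha0 : ∀ t ∈ T, a t v₀ = 0 := by
        intro t ht
        obtain ⟨h1, h2, -⟩ := h t ht
        rw [h2 v₀ hv₀]
        exact Finset.sum_eq_zero fun s _ => h1 _ (hv₀M s)
      let a' : ι → α → ℝ := fun t v => if v = v₀ then min (A t v₀) C₀ else a t v
      have hval : flowValue T O a' = flowValue T O a + ∑ t ∈ T, min (A t v₀) C₀ := by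
        apply value_split T O a a' _ v₀ hv₀
        · intro t ht; simp [a', ha0 t ht]
        · intro t _ v _ hv; simp [a', hv]
      rw [← hval]
      refine le_csSup (opt_bdd _ _ _ _ _ _)
        ⟨a', fun t p => if p = (v₀, s₀) then min (A t v₀) C₀ else b t p,
          fun t s => if s = s₀ then min (A t v₀) C₀ else c t s, ?_, rfl⟩
      rw [feas_iff]
      intro t ht
      obtain ⟨h1, h2, h3, h4, h5, h6⟩ := h t ht
      have hm : 0 ≤ min (A t v₀) C₀ := le_min (hA t ht v₀ hv₀) hC₀
      refine ⟨?_, ?_, ?_, ?_, ?_, ?_⟩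
      · intro p hp
        rw [Finset.mem_insert, not_or] at hp
        simp only [hp.1, if_false]
        exact h1 p hp.2
      · intro v hv
        have e : ∀ s ∈ S, (if (v, s) = (v₀, s₀) then min (A t v₀) C₀ else b t (v, s))
            = b t (v, s) := by
          intro s hs
          simp [hne s hs]
        rw [Finset.sum_insert hs₀, Finset.sum_congr rfl e, ← h2 v hv]
        by_cases hvv : v = v₀
        · subst hvv
          simp [a', ha0 t ht]
        · simp [a', hvv, h1 _ (hs₀M v)]
      · intro s hs
        by_cases hss : s = s₀
        · subst hss
          simp only [if_true]
          rw [Finset.sum_eq_single v₀ _ (fun h => (h hv₀).elim)]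
          · simp
          · intro v _ hv
            simp [hv, h1 _ (hs₀M v)]
        · simp only [hss, if_false]
          rw [← h3 s (Finset.mem_of_mem_insert_of_ne hs hss)]
          refine Finset.sum_congr rfl fun v _ => ?_
          simp [hss]
      · intro v hv
        by_cases hvv : v = v₀
        · subst hvv
          simp only [a', if_true]
          exact ⟨hm, min_le_left _ _⟩
        · simpa [a', hvv] using h4 v hv
      · intro p
        split_ifs
        · exact hm
        · exact h5 p
      · intro s hs
        by_cases hss : s = s₀
        · subst hss
          simp only [if_true, Function.update_self]
          exact ⟨hm, min_le_right _ _⟩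
        · simp only [hss, if_false]
          rw [Function.update_of_ne hss]
          exact h6 s (Finset.mem_of_mem_insert_of_ne hs hss)
  refine ⟨hmain, ?_⟩
  rintro ⟨hpos, t, ht, hAt⟩
  rw [hmain]
  have : 0 < ∑ t ∈ T, min (A t v₀) C₀ :=
    Finset.sum_pos' (fun t ht => le_min (hA t ht v₀ hv₀) hC₀) ⟨t, ht, lt_min hAt hpos⟩
  linarith
end

section
/- The single-period time-aggregated relaxation of the location-and-sizing problem overestimates its multi-period optimal value: for every expansion decision feasible for budget G, the multi-period satisfied demand of the corresponding expanded network is at most the satisfied demand of the single-period network obtained from the same expanded network by taking demands Ā_v = Σ_{t∈T} A^t_v and multiplying all station capacities by |T|; consequently, OPT_MILP(G) is at most the optimal value of the location-and-sizing problem for this single-period aggregated instance with the same budget G. -/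
open Finset

/-- Feasibility of an expansion decision `(x, y2, y3, z2, z3)` for budget `G`
(`z2 e, z3 e ∈ {0,1}` is enforced by `z2 e + z3 e ≤ 1` together with ℕ-valuedness;
for pure binaries one also has `z2 e ≤ 1` and `z3 e ≤ 1` as consequences). -/
def ExpFeasible {β : Type*} [DecidableEq β]
    (S S₂ : Finset β) (C P : β → ℝ) (Y : β → ℕ) (Y2 Y3 : ℕ)
    (K I2 I3 J2 J3 : β → ℝ) (G : ℝ)
    (x y2 y3 z2 z3 : β → ℕ) : Prop :=
  (∀ s ∈ S, (x s : ℝ) ≤ (Y s : ℝ) - C s / P s) ∧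
  (∀ e ∈ S₂, y2 e ≤ Y2 * z2 e) ∧
  (∀ e ∈ S₂, y3 e ≤ Y3 * z3 e) ∧
  (∀ e ∈ S₂, z2 e + z3 e ≤ 1) ∧
  ∑ e ∈ S₂, (I2 e * (y2 e : ℝ) + J2 e * (z2 e : ℝ) + I3 e * (y3 e : ℝ) + J3 e * (z3 e : ℝ)) +
      ∑ s ∈ S, K s * (x s : ℝ) ≤ G

/-- Capacities of the expanded network: `C s + P s * x s` for existing stations `s ∈ S`,
and `Q2 * y2 e + Q3 * y3 e` for new stations. -/
def expCap {β : Type*} [DecidableEq β] (S : Finset β) (C P : β → ℝ) (Q2 Q3 : ℝ)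
    (x y2 y3 : β → ℕ) : β → ℝ :=
  fun s => if s ∈ S then C s + P s * (x s : ℝ) else Q2 * (y2 s : ℝ) + Q3 * (y3 s : ℝ)

/-- Optimal value of the location-and-sizing problem with budget `G`: supremum over
feasible expansion decisions of the satisfied demand of the expanded network. -/
noncomputable def OPTMILP {ι α β : Type*} [DecidableEq α] [DecidableEq β]
    (T : Finset ι) (O : Finset α) (S : Finset β) (M : Finset (α × β))
    (A : ι → α → ℝ) (C : β → ℝ)
    (S₂ : Finset β) (M₂ : Finset (α × β))
    (P : β → ℝ) (Q2 Q3 : ℝ) (Y : β → ℕ) (Y2 Y3 : ℕ)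
    (K I2 I3 J2 J3 : β → ℝ) (G : ℝ) : ℝ :=
  sSup {w : ℝ | ∃ x y2 y3 z2 z3,
    ExpFeasible S S₂ C P Y Y2 Y3 K I2 I3 J2 J3 G x y2 y3 z2 z3 ∧
    w = OPT T O (S ∪ S₂) (M ∪ M₂) A (expCap S C P Q2 Q3 x y2 y3)}

theorem flow_nonneg {ι α β : Type*} [DecidableEq α] [DecidableEq β]
    {T : Finset ι} {O : Finset α} {S : Finset β} {M : Finset (α × β)}
    {A : ι → α → ℝ} {C : β → ℝ} {a b c} (h : IsFeasible T O S M A C a b c) :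
    0 ≤ flowValue T O a :=
  Finset.sum_nonneg fun t ht => Finset.sum_nonneg fun v hv => ((h t ht).2.2.2.1 v hv).1

theorem flow_le {ι α β : Type*} [DecidableEq α] [DecidableEq β]
    {T : Finset ι} {O : Finset α} {S : Finset β} {M : Finset (α × β)}
    {A : ι → α → ℝ} {C : β → ℝ} {a b c} (h : IsFeasible T O S M A C a b c) :
    flowValue T O a ≤ ∑ t ∈ T, ∑ v ∈ O, A t v :=
  Finset.sum_le_sum fun t ht => Finset.sum_le_sum fun v hv => ((h t ht).2.2.2.1 v hv).2

theorem OPT_nonneg {ι α β : Type*} [DecidableEq α] [DecidableEq β]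
    (T : Finset ι) (O : Finset α) (S : Finset β) (M : Finset (α × β))
    (A : ι → α → ℝ) (C : β → ℝ) : 0 ≤ OPT T O S M A C := by
  apply Real.sSup_nonneg
  rintro x ⟨a, b, c, h, rfl⟩
  exact flow_nonneg h

theorem OPT_le {ι α β : Type*} [DecidableEq α] [DecidableEq β]
    (T : Finset ι) (O : Finset α) (S : Finset β) (M : Finset (α × β))
    (A : ι → α → ℝ) (C : β → ℝ) (hA : ∀ t ∈ T, ∀ v ∈ O, 0 ≤ A t v) :
    OPT T O S M A C ≤ ∑ t ∈ T, ∑ v ∈ O, A t v := by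
  apply Real.sSup_le
  · rintro x ⟨a, b, c, h, rfl⟩
    exact flow_le h
  · exact Finset.sum_nonneg fun t ht => Finset.sum_nonneg fun v hv => hA t ht v hv

theorem OPT_agg {ι α β : Type*} [DecidableEq α] [DecidableEq β]
    (T : Finset ι) (O : Finset α) (S : Finset β) (M : Finset (α × β))
    (A : ι → α → ℝ) (C : β → ℝ) (t₀ : ι) :
    OPT T O S M A C ≤ OPT {t₀} O S M (fun _ v => ∑ t ∈ T, A t v)
      (fun s => (T.card : ℝ) * C s) := by
  apply Real.sSup_le
  · rintro x ⟨a, b, c, h, rfl⟩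
    apply le_csSup
    · refine ⟨∑ t ∈ {t₀}, ∑ v ∈ O, ∑ t ∈ T, A t v, ?_⟩
      rintro x ⟨a, b, c, h, rfl⟩
      exact flow_le h
    · refine ⟨fun _ v => ∑ t ∈ T, a t v, fun _ p => ∑ t ∈ T, b t p,
        fun _ s => ∑ t ∈ T, c t s, ?_, ?_⟩
      · intro _ _
        refine ⟨?_, ?_, ?_, ?_, ?_, ?_⟩
        · intro p hp
          exact Finset.sum_eq_zero fun t ht => (h t ht).1 p hp
        · intro v hv
          dsimp only
          rw [Finset.sum_comm]
          exact Finset.sum_congr rfl fun t ht => (h t ht).2.1 v hv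
        · intro s hs
          dsimp only
          rw [Finset.sum_comm]
          exact Finset.sum_congr rfl fun t ht => (h t ht).2.2.1 s hs
        · intro v hv
          exact ⟨Finset.sum_nonneg fun t ht => ((h t ht).2.2.2.1 v hv).1,
            Finset.sum_le_sum fun t ht => ((h t ht).2.2.2.1 v hv).2⟩
        · intro p
          exact Finset.sum_nonneg fun t ht => (h t ht).2.2.2.2.1 p
        · intro s hs
          refine ⟨Finset.sum_nonneg fun t ht => ((h t ht).2.2.2.2.2 s hs).1, ?_⟩
          dsimp only
          rw [← nsmul_eq_mul]
          exact Finset.sum_le_card_nsmul _ _ _ fun t ht => ((h t ht).2.2.2.2.2 s hs).2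
      · simp only [flowValue, Finset.sum_singleton]
        exact Finset.sum_comm
  · exact OPT_nonneg _ _ _ _ _ _

/-- The single-period time-aggregated relaxation of the location-and-sizing problem
overestimates its multi-period optimal value, both decision-wise and for the
optimal values. -/
theorem stmt16
    {ι α β : Type*} [DecidableEq α] [DecidableEq β]
    (T : Finset ι) (O : Finset α) (S : Finset β) (M : Finset (α × β))
    (A : ι → α → ℝ) (C : β → ℝ)
    (hT : T.Nonempty) (hM : M ⊆ O ×ˢ S)
    (hA : ∀ t ∈ T, ∀ v ∈ O, 0 ≤ A t v) (hC : ∀ s ∈ S, 0 ≤ C s)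
    (S₂ : Finset β) (M₂ : Finset (α × β))
    (hSS₂ : Disjoint S S₂) (hM₂ : M₂ ⊆ O ×ˢ S₂)
    (P : β → ℝ) (hP : ∀ s ∈ S, 0 < P s)
    (Q2 Q3 : ℝ) (hQ2 : 0 ≤ Q2) (hQ3 : 0 ≤ Q3)
    (Y : β → ℕ) (Y2 Y3 : ℕ)
    (hYC : ∀ s ∈ S, C s / P s ≤ (Y s : ℝ))
    (K I2 I3 J2 J3 : β → ℝ)
    (hK : ∀ s ∈ S, 0 ≤ K s)
    (hI2 : ∀ e ∈ S₂, 0 ≤ I2 e) (hI3 : ∀ e ∈ S₂, 0 ≤ I3 e)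
    (hJ2 : ∀ e ∈ S₂, 0 ≤ J2 e) (hJ3 : ∀ e ∈ S₂, 0 ≤ J3 e)
    (G : ℝ) (hG : 0 ≤ G) (t₀ : ι) :
    (∀ x y2 y3 z2 z3,
      ExpFeasible S S₂ C P Y Y2 Y3 K I2 I3 J2 J3 G x y2 y3 z2 z3 →
        OPT T O (S ∪ S₂) (M ∪ M₂) A (expCap S C P Q2 Q3 x y2 y3) ≤
          OPT {t₀} O (S ∪ S₂) (M ∪ M₂) (fun _ v => ∑ t ∈ T, A t v)
            (fun s => (T.card : ℝ) * expCap S C P Q2 Q3 x y2 y3 s)) ∧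
      OPTMILP T O S M A C S₂ M₂ P Q2 Q3 Y Y2 Y3 K I2 I3 J2 J3 G ≤
        OPTMILP {t₀} O S M (fun _ v => ∑ t ∈ T, A t v) (fun s => (T.card : ℝ) * C s)
          S₂ M₂ (fun s => (T.card : ℝ) * P s) ((T.card : ℝ) * Q2) ((T.card : ℝ) * Q3)
          Y Y2 Y3 K I2 I3 J2 J3 G := by
  have hagg := fun x y2 y3 => OPT_agg T O (S ∪ S₂) (M ∪ M₂) A (expCap S C P Q2 Q3 x y2 y3) t₀
  refine ⟨fun x y2 y3 z2 z3 _ => hagg x y2 y3, ?_⟩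
  have hn : (T.card : ℝ) ≠ 0 := by
    exact_mod_cast (Finset.card_pos.mpr hT).ne'
  apply Real.sSup_le
  · rintro w ⟨x, y2, y3, z2, z3, hf, rfl⟩
    refine (hagg x y2 y3).trans (le_csSup ?_ ?_)
    · refine ⟨∑ t ∈ {t₀}, ∑ v ∈ O, ∑ t ∈ T, A t v, ?_⟩
      rintro w ⟨x, y2, y3, z2, z3, hf, rfl⟩
      exact OPT_le _ _ _ _ _ _ fun _ _ v hv => Finset.sum_nonneg fun t ht => hA t ht v hv
    · refine ⟨x, y2, y3, z2, z3, ⟨?_, hf.2⟩, ?_⟩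
      · intro s hs
        rw [mul_div_mul_left _ _ hn]
        exact hf.1 s hs
      · congr 1
        funext s
        simp only [expCap]
        split_ifs <;> ring
  · apply Real.sSup_nonneg
    rintro w ⟨x, y2, y3, z2, z3, hf, rfl⟩
    exact OPT_nonneg _ _ _ _ _ _
end
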